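/- Let F be a field of positive characteristic p. Let f ∈ F(t, x₁) be a rational function, and let a, b, c ∈ F(t) with a ≠ 0 and b/a ∉ F(t^p). If the rational function f(t, a(t)·x₁ + b(t)·x₂ + c(t)) lies in the subfield F(t^p, x₁, x₂) of F(t, x₁, x₂), then f lies in the subfield F(t^p, x₁^p) of F(t, x₁). -/

import Mathlib

/-- The inclusion of constants `F → F(t)`. -/
noncomputable def ratC (F : Type) [Field F] : F →+* RatFunc F := RatFunc.C

/-- The inclusion `F(t) → F(t)(x₁) = F(t,x₁)`. -/
noncomputable def ratC2 (F : Type) [Field F] : RatFunc F →+* RatFunc (RatFunc F) := RatFunc.C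

/-- The inclusion `F(t,x₁) → F(t,x₁)(x₂) = F(t,x₁,x₂)`. -/
noncomputable def ratC3 (F : Type) [Field F] :
    RatFunc (RatFunc F) →+* RatFunc (RatFunc (RatFunc F)) := RatFunc.C

/-!
Put `K = F(t)`, `L = F(t, x₁, x₂)`, `y = a x₁ + b x₂ + c`, and let `D` be the partial derivative
`∂/∂t` on `L`. As `y` is transcendental over `K`, substitution is an embedding `φ : K(x₁) → L`, and
`D (φ f) = 0` by hypothesis. The chain rule reads `D (φ f) = φ (∂f/∂t) + φ (∂f/∂x₁) * D y`.
If `∂f/∂x₁ ≠ 0`, then `D y` lies in `K(y)`, so it is killed by the `K`-linear vector field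
`E = b ∂/∂x₁ - a ∂/∂x₂`, which kills `y`. But `E (D y) = b a' - a b'` is nonzero, since
`b / a ∉ F(t^p)` means `(b / a)' ≠ 0`. Hence `∂f/∂x₁ = 0` and then `∂f/∂t = 0`, and the common
kernel of these two derivations is `F(t^p, x₁^p)`.
-/

open Polynomial
open scoped RatFunc

section Extension

variable {R A B M : Type*} [CommRing R] [CommRing A] [CommRing B] [Algebra R A] [Algebra R B]
  [Algebra A B] [IsScalarTower R A B] [Algebra.FormallyEtale A B] [AddCommGroup M]
  [Module R M] [Module A M] [Module B M] [IsScalarTower R A M] [IsScalarTower A B M]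
  [IsScalarTower R B M]

variable (B) in
/-- The extension of a derivation from `A` to a formally étale `A`-algebra `B`, obtained from the
isomorphism `B ⊗[A] Ω[A⁄R] ≃ Ω[B⁄R]`. It is used to pass from polynomials to rational functions. -/
noncomputable def derivationExtension (δ : Derivation R A M) : Derivation R B M :=
  (δ.liftKaehlerDifferential.liftBaseChange B ∘ₗ
    (KaehlerDifferential.tensorKaehlerEquivOfFormallyEtale R A B).symm.toLinearMap).compDer
      (KaehlerDifferential.D R B)

theorem derivationExtension_algebraMap (δ : Derivation R A M) (x : A) :
    derivationExtension B δ (algebraMap A B x) = δ x := by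
  simp [derivationExtension,
    KaehlerDifferential.tensorKaehlerEquivOfFormallyEtale_symm_D_algebraMap]

end Extension

section Constants

variable {R L : Type*} [CommRing R] [Field L] [Algebra R L]

/-- The constants of a derivation of a field, i.e. its kernel, as a subfield. The field
`F(t^p)` is of this form, and `F(t^p, x₁^p)` is the intersection of two such subfields. -/
def constantSubfield (D : Derivation R L L) : Subfield L where
  carrier := {x | D x = 0}
  mul_mem' {x y} (hx : D x = 0) (hy : D y = 0) := by simp [hx, hy]
  one_mem' := D.map_one_eq_zero
  add_mem' {x y} (hx : D x = 0) (hy : D y = 0) := by simp [hx, hy]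
  zero_mem' := map_zero D
  neg_mem' {x} (hx : D x = 0) := by simp [hx]
  inv_mem' x (hx : D x = 0) := by simp [Derivation.leibniz_inv, hx]

theorem mem_constantSubfield {D : Derivation R L L} {x : L} :
    x ∈ constantSubfield D ↔ D x = 0 := Iff.rfl

end Constants

section RatFunc

variable {R K : Type*} [CommRing R] [Field K] [Algebra R K]

/-- The extension of a derivation of `K[X]` to `K(X)` by the quotient rule. -/
noncomputable def ratFuncDerivation (δ : Derivation R K[X] K[X]) : Derivation R K⟮X⟯ K⟮X⟯ :=
  have := Algebra.FormallyEtale.of_isLocalization (Rₘ := K⟮X⟯) (nonZeroDivisors K[X])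
  derivationExtension K⟮X⟯ ((Algebra.linearMap K[X] K⟮X⟯).compDer δ)

theorem ratFuncDerivation_algebraMap (δ : Derivation R K[X] K[X]) (P : K[X]) :
    ratFuncDerivation δ (algebraMap K[X] K⟮X⟯ P) = algebraMap K[X] K⟮X⟯ (δ P) :=
  have := Algebra.FormallyEtale.of_isLocalization (Rₘ := K⟮X⟯) (nonZeroDivisors K[X])
  derivationExtension_algebraMap _ P

variable (K) in
/-- The partial derivative `∂/∂X` on `K(X)`. -/
noncomputable def xDerivation : Derivation K K⟮X⟯ K⟮X⟯ := ratFuncDerivation derivative'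

/-- The derivation of `K(X)` that applies `d` to coefficients and kills `X`. For `K = F(t)` and
`d = d/dt` it is the partial derivative `∂/∂t` on `F(t)(X)`. -/
noncomputable def coeffDerivation (d : Derivation R K K) : Derivation R K⟮X⟯ K⟮X⟯ :=
  ratFuncDerivation (PolynomialModule.equivPolynomialSelf.compDer d.mapCoeffs)

theorem xDerivation_algebraMap (P : K[X]) :
    xDerivation K (algebraMap K[X] K⟮X⟯ P) = algebraMap K[X] K⟮X⟯ (derivative P) :=
  ratFuncDerivation_algebraMap _ P

@[simp]
theorem xDerivation_X : xDerivation K RatFunc.X = 1 := by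
  rw [← RatFunc.algebraMap_X, xDerivation_algebraMap, derivative_X, map_one]

@[simp]
theorem xDerivation_C (k : K) : xDerivation K (RatFunc.C k) = 0 :=
  (xDerivation K).map_algebraMap k

theorem coeffDerivation_algebraMap (d : Derivation R K K) (P : K[X]) :
    coeffDerivation d (algebraMap K[X] K⟮X⟯ P) =
      algebraMap K[X] K⟮X⟯ (PolynomialModule.equivPolynomialSelf (d.mapCoeffs P)) :=
  ratFuncDerivation_algebraMap _ P

@[simp]
theorem coeffDerivation_X (d : Derivation R K K) : coeffDerivation d RatFunc.X = 0 := by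
  rw [← RatFunc.algebraMap_X, coeffDerivation_algebraMap, Derivation.mapCoeffs_X, map_zero,
    map_zero]

@[simp]
theorem coeffDerivation_C (d : Derivation R K K) (k : K) :
    coeffDerivation d (RatFunc.C k) = RatFunc.C (d k) := by
  rw [← RatFunc.algebraMap_C, coeffDerivation_algebraMap, Derivation.mapCoeffs_C,
    PolynomialModule.equivPolynomialSelf_apply_eq, PolynomialModule.equivPolynomial_single,
    monomial_zero_left, RatFunc.algebraMap_C]

variable {L : Type*} [Field L] [Algebra K L] [Algebra R L]

theorem derivation_apply_algHom_algebraMap (φ : K⟮X⟯ →ₐ[K] L) {d : Derivation R K K}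
    {D : Derivation R L L} (hD : ∀ k, D (algebraMap K L k) = algebraMap K L (d k)) (P : K[X]) :
    D (φ (algebraMap K[X] K⟮X⟯ P)) = φ (coeffDerivation d (algebraMap K[X] K⟮X⟯ P)) +
      φ (xDerivation K (algebraMap K[X] K⟮X⟯ P)) * D (φ RatFunc.X) := by
  induction P using Polynomial.induction_on' with
  | add P Q hP hQ =>
    simp only [map_add, hP, hQ]
    ring
  | monomial n k =>
    have hC (k : K) : φ (RatFunc.C k) = algebraMap K L k := φ.commutes k
    simp only [← C_mul_X_pow_eq_monomial, map_mul, map_pow, RatFunc.algebraMap_C,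
      RatFunc.algebraMap_X, Derivation.leibniz, Derivation.leibniz_pow, coeffDerivation_C,
      coeffDerivation_X, xDerivation_C, xDerivation_X, hC, hD, smul_eq_mul, nsmul_eq_mul, map_add,
      map_natCast, map_zero, map_one]
    ring

theorem derivation_apply_algHom (φ : K⟮X⟯ →ₐ[K] L) {d : Derivation R K K}
    {D : Derivation R L L} (hD : ∀ k, D (algebraMap K L k) = algebraMap K L (d k)) (f : K⟮X⟯) :
    D (φ f) = φ (coeffDerivation d f) + φ (xDerivation K f) * D (φ RatFunc.X) := by
  induction f using RatFunc.induction_on with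
  | f P Q _ =>
    simp only [map_div₀, Derivation.leibniz_div, derivation_apply_algHom_algebraMap φ hD,
      smul_eq_mul, map_mul, map_sub, map_pow, map_inv₀]
    ring

theorem coeffDerivation_zero : coeffDerivation (0 : Derivation R K K) = 0 := by
  ext f
  induction f using RatFunc.induction_on with
  | f P Q _ =>
    have hpoly (P : K[X]) :
        coeffDerivation (0 : Derivation R K K) (algebraMap K[X] K⟮X⟯ P) = 0 := by
      have hP : (0 : Derivation R K K).mapCoeffs P = 0 := by
        ext
        simp
      rw [coeffDerivation_algebraMap, hP, map_zero, map_zero]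
    simp [Derivation.leibniz_div, hpoly]

/-- Differentiating `f * f.denom = f.num` shows that `f.denom` divides `δ f.denom`, which has
smaller degree because `f.denom` is monic. -/
theorem map_num_denom_eq_zero_of_ratFuncDerivation_eq_zero {δ : Derivation R K[X] K[X]}
    (hδ : ∀ P : K[X], P.Monic → (δ P).degree < P.degree) {f : K⟮X⟯}
    (hf : ratFuncDerivation δ f = 0) : δ f.num = 0 ∧ δ f.denom = 0 := by
  have hmul : f * algebraMap K[X] K⟮X⟯ f.denom = algebraMap K[X] K⟮X⟯ f.num := by
    simpa using (div_eq_iff (by simp [f.denom_ne_zero])).1 f.num_div_denom |>.symm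
  have hquot : f * algebraMap K[X] K⟮X⟯ (δ f.denom) = algebraMap K[X] K⟮X⟯ (δ f.num) := by
    simpa [ratFuncDerivation_algebraMap, hf] using congrArg (ratFuncDerivation δ) hmul
  have hcross : f.num * δ f.denom = f.denom * δ f.num := by
    apply RatFunc.algebraMap_injective K
    rw [map_mul, map_mul, ← hmul, ← hquot]
    ring
  have hdenom : δ f.denom = 0 :=
    eq_zero_of_dvd_of_degree_lt
      (f.isCoprime_num_denom.symm.dvd_of_dvd_mul_left (Dvd.intro _ hcross.symm))
      (hδ _ f.monic_denom)
  refine ⟨?_, hdenom⟩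
  simpa [hdenom, f.denom_ne_zero] using hcross.symm

theorem derivative_num_denom_eq_zero {f : K⟮X⟯} (hf : xDerivation K f = 0) :
    derivative f.num = 0 ∧ derivative f.denom = 0 :=
  map_num_denom_eq_zero_of_ratFuncDerivation_eq_zero
    (fun _ hP => degree_derivative_lt hP.ne_zero) hf

theorem degree_mapCoeffs_lt (d : Derivation R K K) {P : K[X]} (hP : P.Monic) :
    (PolynomialModule.equivPolynomialSelf (d.mapCoeffs P)).degree < P.degree := by
  have hcoeff (n : ℕ) :
      (PolynomialModule.equivPolynomialSelf (d.mapCoeffs P)).coeff n = d (P.coeff n) := rfl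
  rw [degree_eq_natDegree hP.ne_zero, degree_lt_iff_coeff_zero]
  intro n hn
  rw [hcoeff]
  obtain rfl | hlt := hn.eq_or_lt
  · rw [hP.coeff_natDegree, d.map_one_eq_zero]
  · rw [coeff_eq_zero_of_natDegree_lt hlt, map_zero]

theorem map_coeff_num_denom_eq_zero {d : Derivation R K K} {f : K⟮X⟯}
    (hf : coeffDerivation d f = 0) (n : ℕ) :
    d (f.num.coeff n) = 0 ∧ d (f.denom.coeff n) = 0 := by
  obtain ⟨hnum, hdenom⟩ := map_num_denom_eq_zero_of_ratFuncDerivation_eq_zero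
    (fun _ hP => degree_mapCoeffs_lt d hP) hf
  exact ⟨congrArg (coeff · n) hnum, congrArg (coeff · n) hdenom⟩

theorem algebraMap_mem_of_derivative_eq_zero (p : ℕ) [CharP K p] {S : Subfield K⟮X⟯}
    (hX : RatFunc.X ^ p ∈ S) {P : K[X]} (hP : derivative P = 0)
    (hcoeff : ∀ n, RatFunc.C (P.coeff n) ∈ S) : algebraMap K[X] K⟮X⟯ P ∈ S := by
  have hdvd (n : ℕ) (hn : P.coeff n ≠ 0) : p ∣ n := by
    cases n with
    | zero => exact dvd_zero p
    | succ m =>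
      have hm : P.coeff (m + 1) * (m + 1 : ℕ) = 0 := by
        simpa [coeff_derivative] using congrArg (coeff · m) hP
      exact (CharP.cast_eq_zero_iff K p _).1 ((mul_eq_zero.1 hm).resolve_left hn)
  rw [P.as_sum_range_C_mul_X_pow, map_sum]
  refine sum_mem fun n _ => ?_
  rw [map_mul, map_pow, RatFunc.algebraMap_C, RatFunc.algebraMap_X]
  by_cases hn : P.coeff n = 0
  · simp [hn]
  · obtain ⟨m, rfl⟩ := hdvd n hn
    rw [pow_mul]
    exact mul_mem (hcoeff _) (pow_mem hX m)

theorem constantSubfield_xDerivation_inf_coeffDerivation (p : ℕ) [CharP K p]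
    (d : Derivation R K K) :
    constantSubfield (xDerivation K) ⊓ constantSubfield (coeffDerivation d) =
      (constantSubfield d).map RatFunc.C ⊔ Subfield.closure {RatFunc.X ^ p} := by
  apply le_antisymm
  · rintro f ⟨hx, hd⟩
    obtain ⟨hnum, hdenom⟩ := derivative_num_denom_eq_zero hx
    have hcoeff := map_coeff_num_denom_eq_zero hd
    have hC {k : K} (hk : d k = 0) :
        RatFunc.C k ∈ (constantSubfield d).map RatFunc.C ⊔ Subfield.closure {RatFunc.X ^ p} :=
      le_sup_left (a := (constantSubfield d).map RatFunc.C) ⟨k, hk, rfl⟩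
    have hX : RatFunc.X ^ p ∈
        (constantSubfield d).map RatFunc.C ⊔ Subfield.closure {RatFunc.X ^ p} :=
      le_sup_right (a := (constantSubfield d).map RatFunc.C) (Subfield.subset_closure rfl)
    rw [← f.num_div_denom]
    exact div_mem
      (algebraMap_mem_of_derivative_eq_zero p hX hnum fun n => hC (hcoeff n).1)
      (algebraMap_mem_of_derivative_eq_zero p hX hdenom fun n => hC (hcoeff n).2)
  · refine sup_le ?_ (Subfield.closure_le.2 (Set.singleton_subset_iff.2 ⟨?_, ?_⟩))
    · rintro _ ⟨k, hk, rfl⟩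
      exact ⟨xDerivation_C k, by simp [mem_constantSubfield, mem_constantSubfield.1 hk]⟩
    · have := charP_of_injective_algebraMap (RatFunc.C_injective (K := K)) p
      simp [mem_constantSubfield, Derivation.leibniz_pow]
    · simp [mem_constantSubfield, Derivation.leibniz_pow]

theorem constantSubfield_xDerivation (p : ℕ) [CharP K p] :
    constantSubfield (xDerivation K) =
      Subfield.closure (Set.range (RatFunc.C : K →+* K⟮X⟯) ∪ {RatFunc.X ^ p}) := by
  have htop : constantSubfield (0 : Derivation K K K) = ⊤ := top_le_iff.1 fun _ _ => rfl
  have htop' : constantSubfield (coeffDerivation (0 : Derivation K K K)) = ⊤ := by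
    rw [coeffDerivation_zero]
    exact top_le_iff.1 fun _ _ => rfl
  have h := constantSubfield_xDerivation_inf_coeffDerivation p (0 : Derivation K K K)
  rwa [htop', inf_top_eq, htop, ← RingHom.fieldRange_eq_map,
    ← Subfield.closure_eq (RatFunc.C : K →+* K⟮X⟯).fieldRange, ← Subfield.closure_union,
    RingHom.coe_fieldRange] at h

theorem derivation_algHom_eq_zero (φ : K⟮X⟯ →ₐ[K] L) (E : Derivation K L L)
    (hE : E (φ RatFunc.X) = 0) (f : K⟮X⟯) : E (φ f) = 0 := by
  rw [derivation_apply_algHom φ (d := 0) (fun k => by simp), hE, coeffDerivation_zero]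
  simp

theorem mem_constantSubfield_of_derivation_algHom_eq_zero (φ : K⟮X⟯ →ₐ[K] L)
    {d : Derivation R K K} {D : Derivation R L L}
    (hD : ∀ k, D (algebraMap K L k) = algebraMap K L (d k)) {E : Derivation K L L}
    (hE : E (φ RatFunc.X) = 0) (hED : E (D (φ RatFunc.X)) ≠ 0) {f : K⟮X⟯} (hf : D (φ f) = 0) :
    f ∈ constantSubfield (xDerivation K) ⊓ constantSubfield (coeffDerivation d) := by
  have hchain : φ (coeffDerivation d f) + φ (xDerivation K f) * D (φ RatFunc.X) = 0 := by
    rw [← derivation_apply_algHom φ hD, hf]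
  have hx : xDerivation K f = 0 := by
    by_contra hx
    have hy : D (φ RatFunc.X) = φ (-coeffDerivation d f / xDerivation K f) := by
      rw [map_div₀, map_neg, eq_div_iff ((map_ne_zero φ).2 hx)]
      linear_combination hchain
    exact hED (hy ▸ derivation_algHom_eq_zero φ E hE _)
  refine ⟨hx, (map_eq_zero φ).1 ?_⟩
  simpa [hx] using hchain

end RatFunc

universe u in
theorem exists_algHom_eq_eval {K L : Type u} [Field K] [Field L] [Algebra K L] {y : L}
    (hy : Transcendental K y) :
    ∃ φ : K⟮X⟯ →ₐ[K] L, φ RatFunc.X = y ∧ ∀ f, φ f = RatFunc.eval (algebraMap K L) y f := by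
  have hinj := transcendental_iff_injective.1 hy
  have hy' : nonZeroDivisors K[X] ≤ (nonZeroDivisors L).comap (aeval (R := K) y) :=
    nonZeroDivisors_le_comap_nonZeroDivisors_of_injective _ hinj
  refine ⟨RatFunc.liftAlgHom (aeval y) hy', ?_, fun f => ?_⟩
  · rw [← RatFunc.algebraMap_X, ← div_one (algebraMap K[X] K⟮X⟯ X), ← map_one (algebraMap K[X] _),
      RatFunc.liftAlgHom_apply_div]
    simp
  · rw [RatFunc.liftAlgHom_apply, RatFunc.eval, aeval_def, aeval_def]

section AffineForm

variable {R K : Type*} [CommRing R] [Field K] [Algebra R K]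

/-- The form `a X₁ + b X₂ + c` in `K(X₁)(X₂)`; `X₁` is the inner variable, `X₂` the outer one. -/
noncomputable def affineForm (a b c : K) : K⟮X⟯⟮X⟯ :=
  RatFunc.C (RatFunc.C a * RatFunc.X) + RatFunc.C (RatFunc.C b) * RatFunc.X +
    RatFunc.C (RatFunc.C c)

/-- The vector field `b ∂/∂X₁ - a ∂/∂X₂` on `K(X₁)(X₂)`, which annihilates every form
`a X₁ + b X₂ + c`. -/
noncomputable def affineFormAnnihilator (a b : K) : Derivation K K⟮X⟯⟮X⟯ K⟮X⟯⟮X⟯ :=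
  b • coeffDerivation (xDerivation K) - a • (xDerivation K⟮X⟯).restrictScalars K

theorem algebraMap_eq_C_C (k : K) :
    algebraMap K K⟮X⟯⟮X⟯ k = RatFunc.C (RatFunc.C k) := rfl

theorem affineFormAnnihilator_affineForm (a b a' b' c' : K) :
    affineFormAnnihilator a b (affineForm a' b' c') =
      algebraMap K K⟮X⟯⟮X⟯ (b * a' - a * b') := by
  simp [affineFormAnnihilator, affineForm, Algebra.smul_def, algebraMap_eq_C_C]

theorem coeffDerivation_coeffDerivation_affineForm (d : Derivation R K K) (a b c : K) :
    coeffDerivation (coeffDerivation d) (affineForm a b c) = affineForm (d a) (d b) (d c) := by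
  simp [affineForm, mul_comm]

theorem transcendental_affineForm (a : K) {b : K} (hb : b ≠ 0) (c : K) :
    Transcendental K (affineForm a b c) := by
  refine Transcendental.of_tower_top K (L := K⟮X⟯) (RatFunc.transcendental_of_ne_C _ ?_)
  rintro ⟨g, hg⟩
  have hdb : xDerivation K⟮X⟯ (affineForm a b c) = RatFunc.C (RatFunc.C b) := by
    simp [affineForm]
  rw [hg, xDerivation_C] at hdb
  exact hb (by simpa using hdb.symm)

theorem mem_sup_of_eval_affineForm (p : ℕ) [CharP K p] (d : Derivation R K K) {a b c : K}
    (hba : b / a ∉ constantSubfield d) {f : K⟮X⟯}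
    (hf : RatFunc.eval (algebraMap K K⟮X⟯⟮X⟯) (affineForm a b c) f ∈
      constantSubfield (coeffDerivation (coeffDerivation d))) :
    f ∈ (constantSubfield d).map RatFunc.C ⊔ Subfield.closure {RatFunc.X ^ p} := by
  have hb : b ≠ 0 := by
    rintro rfl
    exact hba (by simp [zero_mem])
  have hwronskian : b * d a - a * d b ≠ 0 := fun h =>
    hba <| by
      rw [mem_constantSubfield, Derivation.leibniz_div, smul_eq_mul, smul_eq_mul, smul_eq_mul]
      linear_combination -(a⁻¹ ^ 2) * h
  obtain ⟨φ, hφX, hφ⟩ := exists_algHom_eq_eval (transcendental_affineForm a hb c)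
  rw [← hφ, mem_constantSubfield] at hf
  rw [← constantSubfield_xDerivation_inf_coeffDerivation]
  refine mem_constantSubfield_of_derivation_algHom_eq_zero φ
    (E := affineFormAnnihilator a b) (fun k => by simp [algebraMap_eq_C_C]) ?_ ?_ hf
  · rw [hφX, affineFormAnnihilator_affineForm, mul_comm, sub_self, map_zero]
  · rw [hφX, coeffDerivation_coeffDerivation_affineForm, affineFormAnnihilator_affineForm]
    exact (_root_.map_ne_zero _).2 hwronskian

end AffineForm

theorem mem_Ftp_x1p_of_subst_general {F : Type*} [Field F] (p : ℕ) [CharP F p]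
    {f : F⟮X⟯⟮X⟯} {a b c : F⟮X⟯}
    (hba : b / a ∉ Subfield.closure
      (Set.range (RatFunc.C : F →+* F⟮X⟯) ∪ {RatFunc.X ^ p}))
    (hsubst : RatFunc.eval (algebraMap F⟮X⟯ F⟮X⟯⟮X⟯⟮X⟯) (affineForm a b c) f ∈ Subfield.closure
      (Set.range (fun k : F => (RatFunc.C (RatFunc.C (RatFunc.C k)) : F⟮X⟯⟮X⟯⟮X⟯)) ∪
        {RatFunc.C (RatFunc.C ((RatFunc.X : F⟮X⟯) ^ p)), RatFunc.C (RatFunc.X : F⟮X⟯⟮X⟯),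
          RatFunc.X})) :
    f ∈ Subfield.closure (Set.range (fun k : F => (RatFunc.C (RatFunc.C k) : F⟮X⟯⟮X⟯)) ∪
      {RatFunc.C ((RatFunc.X : F⟮X⟯) ^ p), RatFunc.X ^ p}) := by
  have := charP_of_injective_algebraMap (RatFunc.C_injective (K := F)) p
  have hXp : xDerivation F (RatFunc.X ^ p) = 0 := by
    rw [← mem_constantSubfield, constantSubfield_xDerivation p]
    exact Subfield.subset_closure (Or.inr rfl)
  rw [← constantSubfield_xDerivation] at hba
  have hg : RatFunc.eval (algebraMap F⟮X⟯ F⟮X⟯⟮X⟯⟮X⟯) (affineForm a b c) f ∈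
      constantSubfield (coeffDerivation (coeffDerivation (xDerivation F))) := by
    refine Subfield.closure_le.2 ?_ hsubst
    rintro _ (⟨k, rfl⟩ | rfl | rfl | rfl) <;>
      simp only [SetLike.mem_coe, mem_constantSubfield, coeffDerivation_C, coeffDerivation_X,
        xDerivation_C, hXp, map_zero]
  have hf := mem_sup_of_eval_affineForm p _ hba hg
  rwa [constantSubfield_xDerivation p, RingHom.map_field_closure, ← Subfield.closure_union,
    Set.image_union, ← Set.range_comp, Set.image_singleton, Set.union_assoc] at hf

/-- Let `F` be a field of characteristic `p > 0`. Identify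
`F(t,x₁)` with `RatFunc (RatFunc F)` (innermost variable `t`, then `x₁`) and
`F(t,x₁,x₂)` with `RatFunc (RatFunc (RatFunc F))` (innermost `t`, then `x₁`, outermost `x₂`).
Let `f ∈ F(t,x₁)` and `a, b, c ∈ F(t)` with `a ≠ 0` and `b/a ∉ F(t^p)`. If
`f(t, a(t)x₁ + b(t)x₂ + c(t))` lies in the subfield `F(t^p, x₁, x₂)` of `F(t,x₁,x₂)`, then
`f` lies in the subfield `F(t^p, x₁^p)` of `F(t,x₁)`. -/
theorem mem_Ftp_x1p_of_subst (F : Type) [Field F] (p : ℕ) [CharP F p] (hp : 0 < p)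
    (f : RatFunc (RatFunc F)) (a b c : RatFunc F) (ha : a ≠ 0)
    (hba : b / a ∉ Subfield.closure (Set.range (ratC F) ∪ {RatFunc.X ^ p}))
    (hsubst :
      RatFunc.eval ((ratC3 F).comp (ratC2 F))
        (ratC3 F (ratC2 F a * RatFunc.X) + ratC3 F (ratC2 F b) * RatFunc.X +
          ratC3 F (ratC2 F c)) f
      ∈ Subfield.closure
          (Set.range (((ratC3 F).comp (ratC2 F)).comp (ratC F))
            ∪ {ratC3 F (ratC2 F (RatFunc.X ^ p)), ratC3 F RatFunc.X, RatFunc.X})) :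
    f ∈ Subfield.closure
        (Set.range ((ratC2 F).comp (ratC F))
          ∪ {ratC2 F (RatFunc.X ^ p), RatFunc.X ^ p}) :=
  mem_Ftp_x1p_of_subst_general p hba hsubst
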